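/- arXiv:2003.08707 — 5 statements merged into one kernel-verified Lean document; each statement's English description precedes it below -/
import Mathlib

section
/- Let N be a natural number with N > 3 and let a be an element of ZMod N satisfying a · (1 − a) = 1. Then a is a unit of ZMod N and the multiplicative order of a in ZMod N is exactly 6. -/
/-!
The condition `a * (1 - a) = 1` says that `a` is a root of the cyclotomic polynomial
`Φ₆ = X ^ 2 - X + 1`, which divides `X ^ 3 + 1`; hence `a ^ 3 = -1` and `a ^ 6 = 1`. An order
properly dividing `6` would give `a ^ 3 = 1`, hence `2 = 0`, or `a ^ 2 = 1`, hence `a = 2` and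
`3 = 0`.
-/

theorem orderOf_eq_prime_mul_prime {M : Type*} [Monoid M] {x : M} {p q : ℕ} (hp : p.Prime)
    (hq : q.Prime) (hpq : x ^ (p * q) = 1) (hxp : x ^ p ≠ 1) (hxq : x ^ q ≠ 1) :
    orderOf x = p * q := by
  refine orderOf_eq_of_pow_and_pow_div_prime (Nat.mul_pos hp.pos hq.pos) hpq fun r hr hdvd ↦ ?_
  rcases hr.dvd_mul.mp hdvd with hrp | hrq
  · obtain rfl := (Nat.prime_dvd_prime_iff_eq hr hp).mp hrp
    rwa [Nat.mul_div_cancel_left q hr.pos]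
  · obtain rfl := (Nat.prime_dvd_prime_iff_eq hr hq).mp hrq
    rwa [Nat.mul_div_cancel p hr.pos]

section Ring

variable {R : Type*} [Ring R] {a : R}

theorem mul_one_sub_eq_one_iff_sq_eq_sub_one : a * (1 - a) = 1 ↔ a ^ 2 = a - 1 := by
  rw [mul_one_sub, ← sq, sub_eq_iff_eq_add, eq_sub_iff_add_eq', eq_comm]

theorem isUnit_of_mul_one_sub_eq_one (ha : a * (1 - a) = 1) : IsUnit a :=
  have hcomm : Commute a (1 - a) := (Commute.one_right a).sub_right (Commute.refl a)
  (hcomm.isUnit_mul_iff.mp (ha.symm ▸ isUnit_one)).1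

theorem pow_three_eq_neg_one_of_mul_one_sub_eq_one (ha : a * (1 - a) = 1) : a ^ 3 = -1 :=
  calc
    a ^ 3 = a * a ^ 2 := pow_succ' a 2
    _ = a * (a - 1) := by rw [mul_one_sub_eq_one_iff_sq_eq_sub_one.mp ha]
    _ = -(a * (1 - a)) := by rw [← mul_neg, neg_sub]
    _ = -1 := by rw [ha]

theorem pow_three_ne_one_of_mul_one_sub_eq_one (h2 : (2 : R) ≠ 0) (ha : a * (1 - a) = 1) :
    a ^ 3 ≠ 1 := by
  intro h
  rw [pow_three_eq_neg_one_of_mul_one_sub_eq_one ha, neg_eq_iff_add_eq_zero,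
    one_add_one_eq_two] at h
  exact h2 h

theorem sq_ne_one_of_mul_one_sub_eq_one (h3 : (3 : R) ≠ 0) (ha : a * (1 - a) = 1) :
    a ^ 2 ≠ 1 := by
  intro h
  have ha2 : a = 2 := by
    rw [← one_add_one_eq_two, ← sub_eq_iff_eq_add,
      ← mul_one_sub_eq_one_iff_sq_eq_sub_one.mp ha, h]
  refine h3 ?_
  calc
    (3 : R) = 2 ^ 2 - 1 := by norm_num
    _ = 0 := by rw [← ha2, h, sub_self]

theorem typeII_isUnit_and_orderOf_eq_six_general (h2 : (2 : R) ≠ 0) (h3 : (3 : R) ≠ 0)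
    (ha : a * (1 - a) = 1) : IsUnit a ∧ orderOf a = 6 := by
  refine ⟨isUnit_of_mul_one_sub_eq_one ha, ?_⟩
  have hpow : a ^ (2 * 3) = 1 := by
    rw [pow_mul', pow_three_eq_neg_one_of_mul_one_sub_eq_one ha, neg_one_sq]
  exact orderOf_eq_prime_mul_prime Nat.prime_two Nat.prime_three hpow
    (sq_ne_one_of_mul_one_sub_eq_one h3 ha) (pow_three_ne_one_of_mul_one_sub_eq_one h2 ha)

end Ring

theorem natCast_ne_zero_of_pos_of_lt_char {R : Type*} [AddMonoidWithOne R] {n k : ℕ} [CharP R n]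
    (hk : 0 < k) (hkn : k < n) : (k : R) ≠ 0 :=
  fun h ↦ Nat.not_dvd_of_pos_of_lt hk hkn ((CharP.cast_eq_zero_iff R n k).mp h)

/-- If `N > 3` and `a : ZMod N` satisfies the type-II condition `a * (1 - a) = 1`,
then `a` is a unit and its multiplicative order is exactly `6` (Lemma 1). -/
theorem typeII_isUnit_and_orderOf_eq_six (N : ℕ) (hN : 3 < N) (a : ZMod N)
    (ha : a * (1 - a) = 1) : IsUnit a ∧ orderOf a = 6 :=
  typeII_isUnit_and_orderOf_eq_six_general
    (mod_cast natCast_ne_zero_of_pos_of_lt_char (R := ZMod N) two_pos (by lia))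
    (mod_cast natCast_ne_zero_of_pos_of_lt_char (R := ZMod N) three_pos hN) ha
end

section
/- Let N, m, n, k be natural numbers with m ≥ 2, n ≥ 1, k ≥ 2, let a be a unit of ZMod N with a^(m−1) = 1, let γ : Fin n → ZMod N, and let P^{a,I} be the associated type-I IRS exponent matrix. Let (r, c) be a cycle of length 2k in P^{a,I} and let l be an integer with 1 ≤ l ≤ m−1. Then θ_{P^{a,I}}(r, c) = 0 if and only if θ_{P^{a,I}}(π^{I,l} ∘ r, c) = 0 (Theorem 1). -/
/-- A cycle of length `2k` in an `m × n` exponent matrix, encoded by index functions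
`r : ℕ → Fin m` and `c : ℕ → Fin n` on the positions `0, 1, …, 2k - 1`, with the successor
of position `s` being `(s + 1) % (2 * k)`: at even positions the row stays and the column
changes, at odd positions the row changes and the column stays. -/
def IsCycle {m n : ℕ} (k : ℕ) (r : ℕ → Fin m) (c : ℕ → Fin n) : Prop :=
  ∀ s < 2 * k,
    (s % 2 = 0 → r s = r ((s + 1) % (2 * k)) ∧ c s ≠ c ((s + 1) % (2 * k))) ∧
    (s % 2 = 1 → r s ≠ r ((s + 1) % (2 * k)) ∧ c s = c ((s + 1) % (2 * k)))

/-- The cycle sum `θ_P(r, c) = ∑_{s = 0}^{2k - 1} (-1)^s P(r(s), c(s))` of a length-`2k`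
cycle in an exponent matrix `P`. -/
def cycleSum {N m n : ℕ} (k : ℕ) (P : Fin m → Fin n → ZMod N)
    (r : ℕ → Fin m) (c : ℕ → Fin n) : ZMod N :=
  ∑ s ∈ Finset.range (2 * k), (-1 : ZMod N) ^ s * P (r s) (c s)

/-- Rotation by `l` of the cyclically ordered set `1, …, d`; for `d = m - 1` it is the action of
`π^{I,l}` on the nonzero row indices. It is a rotation only for `1 ≤ i ≤ d` and `l ≤ d`. -/
def cyclicShift (d l i : ℕ) : ℕ :=
  if i + l ≤ d then i + l else i + l - d

theorem cyclicShift_pos {d l i : ℕ} (hi : 0 < i) : 0 < cyclicShift d l i := by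
  unfold cyclicShift
  split_ifs <;> omega

theorem cyclicShift_sub_one_modEq {d l i : ℕ} (hi : 0 < i) :
    cyclicShift d l i - 1 ≡ l + (i - 1) [MOD d] := by
  unfold cyclicShift
  split_ifs with hle
  · rw [show i + l - 1 = l + (i - 1) by omega]
  · rw [show l + (i - 1) = i + l - d - 1 + d by omega]
    exact Nat.ModEq.symm Nat.add_modEq_right

theorem pow_cyclicShift_sub_one {M : Type*} [Monoid M] {a : M} {d : ℕ} (ha : a ^ d = 1)
    (l : ℕ) {i : ℕ} (hi : 0 < i) :
    a ^ (cyclicShift d l i - 1) = a ^ l * a ^ (i - 1) := by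
  rw [← pow_add]
  exact pow_eq_pow_of_modEq (cyclicShift_sub_one_modEq hi) ha

/-- The type-I IRS exponent matrix `P^{a,I}`: a zero row followed by the rows `a ^ (i - 1) • γ`
for `1 ≤ i ≤ m - 1`. -/
def typeIExponentMatrix {R ι : Type*} [MonoidWithZero R] {m : ℕ} (a : R) (γ : ι → R)
    (i : Fin m) (j : ι) : R :=
  if (i : ℕ) = 0 then 0 else a ^ ((i : ℕ) - 1) * γ j

theorem typeIExponentMatrix_map_row {R ι : Type*} [MonoidWithZero R] {m l : ℕ} {a : R}
    (ha : a ^ (m - 1) = 1) (γ : ι → R) {π : Fin m → Fin m}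
    (hπ0 : ∀ i : Fin m, (i : ℕ) = 0 → π i = i)
    (hπ : ∀ i : Fin m, 1 ≤ (i : ℕ) → (π i : ℕ) = cyclicShift (m - 1) l i) (i : Fin m) (j : ι) :
    typeIExponentMatrix a γ (π i) j = a ^ l * typeIExponentMatrix a γ i j := by
  unfold typeIExponentMatrix
  rcases Nat.eq_zero_or_pos (i : ℕ) with hi | hi
  · rw [hπ0 i hi, if_pos hi, mul_zero]
  · rw [hπ i hi, if_neg (cyclicShift_pos hi).ne', if_neg hi.ne',
      pow_cyclicShift_sub_one ha l hi, mul_assoc]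

theorem cycleSum_map_row {N m m' n : ℕ} (k : ℕ) {P : Fin m → Fin n → ZMod N}
    {Q : Fin m' → Fin n → ZMod N} {f : Fin m → Fin m'} {u : ZMod N}
    (h : ∀ i j, Q (f i) j = u * P i j) (r : ℕ → Fin m) (c : ℕ → Fin n) :
    cycleSum k Q (fun s => f (r s)) c = u * cycleSum k P r c := by
  simp only [cycleSum, h, Finset.mul_sum, mul_left_comm]

theorem typeI_cycleSum_eq_zero_iff_general {N m n : ℕ} (k : ℕ) {a : ZMod N} (ha : IsUnit a)
    (haord : a ^ (m - 1) = 1) (γ : Fin n → ZMod N) (r : ℕ → Fin m) (c : ℕ → Fin n)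
    {l : ℕ} {π : Fin m → Fin m}
    (hπ0 : ∀ i : Fin m, (i : ℕ) = 0 → π i = i)
    (hπ : ∀ i : Fin m, 1 ≤ (i : ℕ) → (π i : ℕ) = cyclicShift (m - 1) l i) :
    cycleSum k (typeIExponentMatrix a γ) r c = 0 ↔
      cycleSum k (typeIExponentMatrix a γ) (fun s => π (r s)) c = 0 := by
  rw [cycleSum_map_row k (typeIExponentMatrix_map_row haord γ hπ0 hπ) r c,
    (ha.pow l).mul_right_eq_zero]

/-- Theorem 1: for a type-I IRS exponent matrix `P^{a,I}` (built from a unit `a` of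
`ZMod N` with `a ^ (m - 1) = 1` and coefficients `γ`), a cycle `(r, c)` of length `2k`
has zero cycle sum if and only if the row-permuted cycle `(π^{I,l} ∘ r, c)` has zero
cycle sum, for every `1 ≤ l ≤ m - 1`. -/
theorem typeI_cycleSum_eq_zero_iff (N m n k : ℕ) (hm : 2 ≤ m) (hn : 1 ≤ n) (hk : 2 ≤ k)
    (a : ZMod N) (ha : IsUnit a) (haord : a ^ (m - 1) = 1)
    (γ : Fin n → ZMod N) (P : Fin m → Fin n → ZMod N)
    (hP : ∀ (i : Fin m) (j : Fin n),
      P i j = if (i : ℕ) = 0 then 0 else a ^ ((i : ℕ) - 1) * γ j)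
    (r : ℕ → Fin m) (c : ℕ → Fin n) (hcyc : IsCycle k r c)
    (l : ℕ) (hl1 : 1 ≤ l) (hl2 : l ≤ m - 1)
    (π : Fin m → Fin m)
    (hπ0 : ∀ i : Fin m, (i : ℕ) = 0 → π i = i)
    (hπ : ∀ i : Fin m, 1 ≤ (i : ℕ) →
      (π i : ℕ) = if (i : ℕ) + l ≤ m - 1 then (i : ℕ) + l else (i : ℕ) + l - (m - 1)) :
    cycleSum k P r c = 0 ↔ cycleSum k P (fun s => π (r s)) c = 0 := by
  obtain rfl : P = typeIExponentMatrix a γ := funext₂ hP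
  exact typeI_cycleSum_eq_zero_iff_general k ha haord γ r c hπ0 hπ
end

section
/- Let N, m, n, k be natural numbers with m ≥ 2, n ≥ 1, k ≥ 2, let a be a unit of ZMod N with a^(m−1) = 1, let γ : Fin n → ZMod N, and let P^{a,I} be the associated type-I IRS exponent matrix. Then for every cycle (r, c) of length 2k in P^{a,I} and every integer l with 1 ≤ l ≤ m−1, one has θ_{P^{a,I}}(π^{I,l} ∘ r, c) = a^l · θ_{P^{a,I}}(r, c) in ZMod N. -/
section TypeI

variable {R κ : Type*} {m l : ℕ} {π : Fin m → Fin m}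

/-- The type-I IRS exponent matrix `P^{a,I}`, with entries in an arbitrary monoid with zero and
columns indexed by an arbitrary type. Rows are numbered from `0`, and row `0` vanishes. -/
def typeIMatrix [MonoidWithZero R] (a : R) (γ : κ → R) (i : Fin m) (j : κ) : R :=
  if (i : ℕ) = 0 then 0 else a ^ ((i : ℕ) - 1) * γ j

/-- The maps of the form `π^{I,l}`: they keep row `0` apart and shift the remaining `m - 1` rows
cyclically by `l`. Wrapping around is encoded as a congruence modulo `m - 1`, so that `l` may be
any natural number. -/
structure IsCyclicRowShift (l : ℕ) (π : Fin m → Fin m) : Prop where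
  val_eq_zero_iff (i : Fin m) : (π i : ℕ) = 0 ↔ (i : ℕ) = 0
  val_modEq (i : Fin m) (hi : (i : ℕ) ≠ 0) : (π i : ℕ) ≡ i + l [MOD m - 1]

namespace IsCyclicRowShift

theorem of_val_eq_ite (hπ0 : ∀ i : Fin m, (i : ℕ) = 0 → π i = i)
    (hπ : ∀ i : Fin m, 1 ≤ (i : ℕ) →
      (π i : ℕ) = if (i : ℕ) + l ≤ m - 1 then (i : ℕ) + l else (i : ℕ) + l - (m - 1)) :
    IsCyclicRowShift l π where
  val_eq_zero_iff i := by
    by_cases hi : (i : ℕ) = 0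
    · rw [hπ0 i hi]
    · have := hπ i (Nat.one_le_iff_ne_zero.mpr hi)
      split_ifs at this <;> omega
  val_modEq i hi := by
    rw [hπ i (Nat.one_le_iff_ne_zero.mpr hi)]
    split_ifs with hil
    · rfl
    · exact (Nat.sub_modulus_modEq_iff (le_of_not_ge hil)).mpr rfl

theorem val_sub_one_modEq (h : IsCyclicRowShift l π) {i : Fin m} (hi : (i : ℕ) ≠ 0) :
    (π i : ℕ) - 1 ≡ l + ((i : ℕ) - 1) [MOD m - 1] := by
  have hπi : (π i : ℕ) ≠ 0 := (h.val_eq_zero_iff i).not.mpr hi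
  apply Nat.ModEq.add_right_cancel' 1
  rw [Nat.sub_one_add_one hπi, add_assoc, Nat.sub_one_add_one hi, add_comm l]
  exact h.val_modEq i hi

theorem typeIMatrix_apply [MonoidWithZero R] {a : R} (h : IsCyclicRowShift l π)
    (ha : a ^ (m - 1) = 1) (γ : κ → R) (i : Fin m) (j : κ) :
    typeIMatrix a γ (π i) j = a ^ l * typeIMatrix a γ i j := by
  by_cases hi : (i : ℕ) = 0
  · rw [typeIMatrix, typeIMatrix, if_pos hi, if_pos ((h.val_eq_zero_iff i).mpr hi), mul_zero]
  · have hπi : (π i : ℕ) ≠ 0 := (h.val_eq_zero_iff i).not.mpr hi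
    have hpow : a ^ ((π i : ℕ) - 1) = a ^ (l + ((i : ℕ) - 1)) :=
      pow_eq_pow_of_modEq (h.val_sub_one_modEq hi) ha
    rw [typeIMatrix, typeIMatrix, if_neg hi, if_neg hπi, hpow, pow_add, mul_assoc]

end IsCyclicRowShift

theorem sum_neg_one_pow_mul_mul_left [Ring R] (S : Finset ℕ) (b : R) (f : ℕ → R) :
    ∑ s ∈ S, (-1) ^ s * (b * f s) = b * ∑ s ∈ S, (-1) ^ s * f s := by
  simp_rw [Finset.mul_sum, ((Commute.neg_one_left b).pow_left _).left_comm]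

theorem typeI_cycleSum_perm_eq_pow_mul_general [Ring R] {a : R} (ha : a ^ (m - 1) = 1)
    (γ : κ → R) (hπ : IsCyclicRowShift l π) (S : Finset ℕ) (r : ℕ → Fin m) (c : ℕ → κ) :
    ∑ s ∈ S, (-1) ^ s * typeIMatrix a γ (π (r s)) (c s) =
      a ^ l * ∑ s ∈ S, (-1) ^ s * typeIMatrix a γ (r s) (c s) := by
  simp_rw [hπ.typeIMatrix_apply ha, sum_neg_one_pow_mul_mul_left]

end TypeI

/-- For a type-I IRS exponent matrix `P^{a,I}` (built from a unit `a` of `ZMod N` with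
`a ^ (m - 1) = 1` and coefficients `γ`) and any cycle `(r, c)` of length `2k`, the cycle
sum of the row-permuted cycle `(π^{I,l} ∘ r, c)` equals `a ^ l` times the cycle sum of
`(r, c)`, for every `1 ≤ l ≤ m - 1`. -/
theorem typeI_cycleSum_perm_eq_pow_mul (N m n k : ℕ) (hm : 2 ≤ m) (hn : 1 ≤ n) (hk : 2 ≤ k)
    (a : ZMod N) (ha : IsUnit a) (haord : a ^ (m - 1) = 1)
    (γ : Fin n → ZMod N) (P : Fin m → Fin n → ZMod N)
    (hP : ∀ (i : Fin m) (j : Fin n),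
      P i j = if (i : ℕ) = 0 then 0 else a ^ ((i : ℕ) - 1) * γ j)
    (r : ℕ → Fin m) (c : ℕ → Fin n) (hcyc : IsCycle k r c)
    (l : ℕ) (hl1 : 1 ≤ l) (hl2 : l ≤ m - 1)
    (π : Fin m → Fin m)
    (hπ0 : ∀ i : Fin m, (i : ℕ) = 0 → π i = i)
    (hπ : ∀ i : Fin m, 1 ≤ (i : ℕ) →
      (π i : ℕ) = if (i : ℕ) + l ≤ m - 1 then (i : ℕ) + l else (i : ℕ) + l - (m - 1)) :
    cycleSum k P (fun s => π (r s)) c = a ^ l * cycleSum k P r c := by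
  obtain rfl : P = typeIMatrix a γ := funext₂ hP
  exact typeI_cycleSum_perm_eq_pow_mul_general haord γ (.of_val_eq_ite hπ0 hπ) _ r c
end

section
/- Let N, n, k be natural numbers with N > 3, n ≥ 1, k ≥ 2, let a be an element of ZMod N satisfying a · (1 − a) = 1, let γ : Fin n → ZMod N, and let P^{a,II} be the associated type-II IRS exponent matrix. Let (r, c) be a cycle of length 2k in P^{a,II} and let l ∈ {1, 2}. Then θ_{P^{a,II}}(r, c) = 0 if and only if θ_{P^{a,II}}(π^{II,l} ∘ r, c) = 0 (Theorem 2). -/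
/-- The row permutation `π^{II,1} : Fin 3 → Fin 3`, `i ↦ (i + 2) mod 3`. -/
def piII : Fin 3 → Fin 3 := fun i => ⟨((i : ℕ) + 2) % 3, by omega⟩

/-!
The type-II matrix satisfies `P (π i) j = -a * P i j + a * γ j`, so up to a term depending on the
column alone, the row permutation `π = π^{II,1}` multiplies it by `-a`. The positions of a cycle
pair up into cyclically consecutive ones with the same column and opposite signs, so column terms
cancel and `π ^ l` multiplies the cycle sum by `(-a) ^ l`. This is a unit because
`a * (1 - a) = 1`.
-/

theorem sum_range_two_mul_neg_one_pow_mul {R : Type*} [Ring R] (f : ℕ → R) (k : ℕ) :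
    ∑ s ∈ Finset.range (2 * k), (-1) ^ s * f s =
      ∑ t ∈ Finset.range k, (f (2 * t) - f (2 * t + 1)) := by
  induction k with
  | zero => simp
  | succ k ih =>
    rw [Nat.mul_succ, Finset.sum_range_succ, Finset.sum_range_succ, ih, Finset.sum_range_succ,
      pow_succ, pow_mul, neg_one_sq, one_pow]
    noncomm_ring

/-- The column half of the cycle condition: each odd position of a closed walk of length `2k` has
the same column as its cyclic successor. It makes alternating sums of column terms telescope. -/
def IsColumnPaired {α : Type*} (k : ℕ) (c : ℕ → α) : Prop :=
  ∀ t < k, c (2 * t + 1) = c (2 * (t + 1) % (2 * k))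

theorem IsCycle.isColumnPaired {m n k : ℕ} {r : ℕ → Fin m} {c : ℕ → Fin n}
    (h : IsCycle k r c) : IsColumnPaired k c :=
  fun t ht => ((h (2 * t + 1) (by lia)).2 (by lia)).2

namespace IsColumnPaired

theorem sum_neg_one_pow_mul_eq_zero {R α : Type*} [Ring R] {k : ℕ} {c : ℕ → α}
    (hc : IsColumnPaired k c) (g : α → R) :
    ∑ s ∈ Finset.range (2 * k), (-1) ^ s * g (c s) = 0 := by
  let f : ℕ → R := fun t => g (c (2 * t % (2 * k)))
  calc ∑ s ∈ Finset.range (2 * k), (-1) ^ s * g (c s)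
      = ∑ t ∈ Finset.range k, (g (c (2 * t)) - g (c (2 * t + 1))) :=
        sum_range_two_mul_neg_one_pow_mul (fun s => g (c s)) k
    _ = ∑ t ∈ Finset.range k, (f t - f (t + 1)) := by
        refine Finset.sum_congr rfl fun t ht => ?_
        have ht : t < k := Finset.mem_range.mp ht
        rw [hc t ht]
        simp only [f, Nat.mod_eq_of_lt (show 2 * t < 2 * k by lia)]
    _ = f 0 - f k := Finset.sum_range_sub' f k
    _ = 0 := by simp [f]

theorem cycleSum_comp_of_affine {N m m' n k : ℕ} {c : ℕ → Fin n} (hc : IsColumnPaired k c)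
    {P : Fin m → Fin n → ZMod N} {Q : Fin m' → Fin n → ZMod N} {σ : Fin m → Fin m'}
    {u : ZMod N} {g : Fin n → ZMod N} (hσ : ∀ i j, Q (σ i) j = u * P i j + g j)
    (r : ℕ → Fin m) :
    cycleSum k Q (fun s => σ (r s)) c = u * cycleSum k P r c := by
  calc cycleSum k Q (fun s => σ (r s)) c
      = u * cycleSum k P r c + ∑ s ∈ Finset.range (2 * k), (-1) ^ s * g (c s) := by
        simp only [cycleSum, hσ, mul_add, Finset.sum_add_distrib, Finset.mul_sum, mul_left_comm]
    _ = u * cycleSum k P r c := by rw [hc.sum_neg_one_pow_mul_eq_zero, add_zero]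

end IsColumnPaired

/-- The type-II IRS exponent matrix `P^{a,II}` as an explicit function of `a` and `γ`, so that its
behaviour under `piII` can be stated as an identity of entries. -/
def typeIIMatrix {R ι : Type*} [Mul R] [Zero R] (a : R) (γ : ι → R) : Fin 3 → ι → R :=
  ![fun _ => 0, γ, fun j => a * γ j]

theorem eq_typeIIMatrix {R ι : Type*} [Mul R] [Zero R] {a : R} {γ : ι → R}
    {P : Fin 3 → ι → R} (hP : ∀ j, P 0 j = 0 ∧ P 1 j = γ j ∧ P 2 j = a * γ j) :
    P = typeIIMatrix a γ := by
  ext i j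
  obtain ⟨h₀, h₁, h₂⟩ := hP j
  fin_cases i
  exacts [h₀, h₁, h₂]

theorem typeIIMatrix_piII {R ι : Type*} [Ring R] {a : R} (ha : a * (1 - a) = 1) (γ : ι → R)
    (i : Fin 3) (j : ι) :
    typeIIMatrix a γ (piII i) j = -a * typeIIMatrix a γ i j + a * γ j := by
  fin_cases i
  · change a * γ j = -a * 0 + a * γ j
    rw [mul_zero, zero_add]
  · change 0 = -a * γ j + a * γ j
    rw [neg_mul, neg_add_cancel]
  · change γ j = -a * (a * γ j) + a * γ j
    calc γ j = a * (1 - a) * γ j := by rw [ha, one_mul]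
      _ = -a * (a * γ j) + a * γ j := by noncomm_ring

theorem cycleSum_typeIIMatrix_piII_iterate {N n k : ℕ} {a : ZMod N} (ha : a * (1 - a) = 1)
    (γ : Fin n → ZMod N) (r : ℕ → Fin 3) {c : ℕ → Fin n} (hc : IsColumnPaired k c) (l : ℕ) :
    cycleSum k (typeIIMatrix a γ) (fun s => piII^[l] (r s)) c =
      (-a) ^ l * cycleSum k (typeIIMatrix a γ) r c := by
  induction l with
  | zero => simp only [Function.iterate_zero, id_eq, pow_zero, one_mul]
  | succ l ih =>
    simp only [Function.iterate_succ_apply']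
    rw [hc.cycleSum_comp_of_affine (typeIIMatrix_piII ha γ), ih, pow_succ', mul_assoc]

theorem typeII_cycleSum_eq_zero_iff_general {N n k : ℕ} {a : ZMod N} (ha : a * (1 - a) = 1)
    (γ : Fin n → ZMod N) (r : ℕ → Fin 3) {c : ℕ → Fin n} (hc : IsColumnPaired k c) (l : ℕ) :
    cycleSum k (typeIIMatrix a γ) r c = 0 ↔
      cycleSum k (typeIIMatrix a γ) (fun s => piII^[l] (r s)) c = 0 := by
  have hunit : IsUnit ((-a) ^ l) := (IsUnit.of_mul_eq_one _ ha).neg.pow l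
  rw [cycleSum_typeIIMatrix_piII_iterate ha γ r hc, hunit.mul_right_eq_zero]

/-- Theorem 2: for a type-II IRS exponent matrix `P^{a,II}` (built from `a : ZMod N`,
`N > 3`, satisfying `a * (1 - a) = 1`, and coefficients `γ`), a cycle `(r, c)` of length
`2k` has zero cycle sum if and only if the row-permuted cycle `(π^{II,l} ∘ r, c)` has zero
cycle sum, for `l ∈ {1, 2}`. -/
theorem typeII_cycleSum_eq_zero_iff (N n k : ℕ) (hN : 3 < N) (hn : 1 ≤ n) (hk : 2 ≤ k)
    (a : ZMod N) (ha : a * (1 - a) = 1)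
    (γ : Fin n → ZMod N) (P : Fin 3 → Fin n → ZMod N)
    (hP : ∀ j : Fin n, P 0 j = 0 ∧ P 1 j = γ j ∧ P 2 j = a * γ j)
    (r : ℕ → Fin 3) (c : ℕ → Fin n) (hcyc : IsCycle k r c)
    (l : ℕ) (hl : l = 1 ∨ l = 2) :
    cycleSum k P r c = 0 ↔ cycleSum k P (fun s => piII^[l] (r s)) c = 0 := by
  rw [eq_typeIIMatrix hP]
  exact typeII_cycleSum_eq_zero_iff_general ha γ r hcyc.isColumnPaired l
end

section
/- Let N be a natural number with N > 3 and let a be an element of ZMod N satisfying a · (1 − a) = 1. Let P : Fin 3 → Fin 2 → ZMod N be the exponent matrix with first column all zeros and second column (0, 1, a), i.e., P(i, 0) = 0 for all i, P(0, 1) = 0, P(1, 1) = 1, P(2, 1) = a. Then for every k with 2 ≤ k ≤ 5 and every cycle (r, c) of length 2k in P, θ_P(r, c) ≠ 0 in ZMod N (Proposition 1: every 3×2 type-II IRS exponent matrix satisfies Fossorier's girth-12 condition). -/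
/-!
The equation `a * (1 - a) = 1` says that `a ^ 2 - a + 1 = 0`, so `0`, `1`, `a` are the vertices of
an equilateral triangle with sides `±1`, `±a`, `±(1 - a)`, all units. In a matrix with two columns
a cycle of length `2k` changes column `k` times, so `k` is even, and its cycle sum is, up to sign,
the alternating sum of the differences between the columns along a closed walk on the rows. For
`k ≤ 5` only `k = 2`, where the sum is a side, and `k = 4` remain. A closed walk of length `4` on
three rows repeats a vertex `x` at distance two, so its alternating sum has the form
`±(2x - y - w)`. If `y = w`, this is twice a side; otherwise it is twice the median from `x`, whose
square is `-3` times the square of the side `y - w`. Hence the sum vanishes only if `2 = 0` or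
`3 = 0`.
-/

section Equilateral

variable {R : Type*} [CommRing R]

/-- An equilateral triangle in `R`, given by its vertices: the sides are units, and the quadratic
form whose zeros over `ℂ` are the equilateral triangles vanishes at the vertices. -/
structure IsEquilateral (v : Fin 3 → R) : Prop where
  isUnit_sub : ∀ {i j}, i ≠ j → IsUnit (v i - v j)
  sum_sq_eq : v 0 ^ 2 + v 1 ^ 2 + v 2 ^ 2 = v 0 * v 1 + v 1 * v 2 + v 2 * v 0

namespace IsEquilateral

theorem of_mul_one_sub_eq_one {a : R} (ha : a * (1 - a) = 1) : IsEquilateral ![0, 1, a] where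
  isUnit_sub {i j} hij := by
    have isUnit_a : IsUnit a := .of_mul_eq_one _ ha
    have isUnit_one_sub : IsUnit (1 - a) := .of_mul_eq_one_right _ ha
    have isUnit_sub_one : IsUnit (a - 1) := by simpa using isUnit_one_sub.neg
    fin_cases i <;> fin_cases j <;> simp_all
  sum_sq_eq := by
    simp only [Matrix.cons_val]
    linear_combination -ha

variable {v : Fin 3 → R}

theorem neg (hv : IsEquilateral v) : IsEquilateral (-v) where
  isUnit_sub {i j} hij := by
    simpa only [Pi.neg_apply, neg_sub_neg] using hv.isUnit_sub hij.symm
  sum_sq_eq := by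
    simp only [Pi.neg_apply]
    linear_combination hv.sum_sq_eq

theorem two_mul_sub_sub_sq (hv : IsEquilateral v) {i j k : Fin 3} (hij : i ≠ j) (hik : i ≠ k)
    (hjk : j ≠ k) : (2 * v i - v j - v k) ^ 2 = -3 * (v j - v k) ^ 2 := by
  have sum_sq_eq : v i ^ 2 + v j ^ 2 + v k ^ 2 = v i * v j + v j * v k + v k * v i := by
    have h := hv.sum_sq_eq
    fin_cases i <;> fin_cases j <;> fin_cases k <;> first | contradiction | skip
    all_goals
      simp only [Fin.zero_eta, Fin.mk_one, Fin.reduceFinMk]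
      linear_combination h
  linear_combination 4 * sum_sq_eq

theorem two_mul_sub_sub_ne_zero (hv : IsEquilateral v) (two_ne : (2 : R) ≠ 0)
    (three_ne : (3 : R) ≠ 0) {i j k : Fin 3} (hij : i ≠ j) (hik : i ≠ k) :
    2 * v i - v j - v k ≠ 0 := by
  intro h
  obtain rfl | hjk := eq_or_ne j k
  · have two_mul_side : 2 * (v i - v j) = 0 := by linear_combination h
    exact two_ne ((hv.isUnit_sub hij).mul_left_eq_zero.mp two_mul_side)
  · have three_mul_side_sq : 3 * (v j - v k) ^ 2 = 0 := by
      linear_combination hv.two_mul_sub_sub_sq hij hik hjk - (2 * v i - v j - v k) * h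
    exact three_ne (((hv.isUnit_sub hjk).pow 2).mul_left_eq_zero.mp three_mul_side_sq)

theorem alternating_sum_ne_zero (hv : IsEquilateral v) (two_ne : (2 : R) ≠ 0)
    (three_ne : (3 : R) ≠ 0) {x y z w : Fin 3} (hxy : x ≠ y) (hyz : y ≠ z) (hzw : z ≠ w)
    (hwx : w ≠ x) : v x - v y + v z - v w ≠ 0 := by
  have eq_or_eq : x = z ∨ y = w := by lia
  intro h
  obtain rfl | rfl := eq_or_eq
  · exact hv.two_mul_sub_sub_ne_zero two_ne three_ne hxy hzw (by linear_combination h)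
  · exact hv.two_mul_sub_sub_ne_zero two_ne three_ne hwx hyz (by linear_combination -h)

end IsEquilateral

end Equilateral

theorem sum_range_two_mul {M : Type*} [AddCommMonoid M] (f : ℕ → M) (k : ℕ) :
    ∑ s ∈ Finset.range (2 * k), f s = ∑ j ∈ Finset.range k, (f (2 * j) + f (2 * j + 1)) := by
  induction k with
  | zero => rfl
  | succ k ih =>
    rw [Nat.mul_succ, Finset.sum_range_succ, Finset.sum_range_succ, Finset.sum_range_succ, ih,
      add_assoc]

namespace IsCycle

section

variable {m n k j : ℕ} {r : ℕ → Fin m} {c : ℕ → Fin n}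

theorem row_two_mul_add_one (h : IsCycle k r c) (hj : j < k) : r (2 * j + 1) = r (2 * j) := by
  have row_eq := ((h (2 * j) (by lia)).1 (by lia)).1
  rwa [Nat.mod_eq_of_lt (by lia), eq_comm] at row_eq

theorem col_two_mul_add_one_ne (h : IsCycle k r c) (hj : j < k) :
    c (2 * j + 1) ≠ c (2 * j) := by
  have col_ne := ((h (2 * j) (by lia)).1 (by lia)).2
  rwa [Nat.mod_eq_of_lt (by lia), ne_comm] at col_ne

theorem row_next_ne (h : IsCycle k r c) (hj : j < k) :
    r (2 * j) ≠ r (2 * ((j + 1) % k)) := by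
  have row_ne := ((h (2 * j + 1) (by lia)).2 (by lia)).1
  rwa [h.row_two_mul_add_one hj, add_assoc, ← Nat.mul_succ, Nat.mul_mod_mul_left] at row_ne

theorem col_next_eq (h : IsCycle k r c) (hj : j < k) :
    c (2 * ((j + 1) % k)) = c (2 * j + 1) := by
  have col_eq := ((h (2 * j + 1) (by lia)).2 (by lia)).2
  rwa [add_assoc, ← Nat.mul_succ, Nat.mul_mod_mul_left, eq_comm] at col_eq

theorem cycleSum_eq {N : ℕ} (h : IsCycle k r c) (P : Fin m → Fin n → ZMod N) :
    cycleSum k P r c =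
      ∑ j ∈ Finset.range k, (P (r (2 * j)) (c (2 * j)) - P (r (2 * j)) (c (2 * j + 1))) := by
  rw [cycleSum, sum_range_two_mul]
  refine Finset.sum_congr rfl fun j hj ↦ ?_
  rw [h.row_two_mul_add_one (Finset.mem_range.mp hj), pow_succ, (even_two_mul j).neg_one_pow]
  ring

end

section TwoColumns

variable {m N k j : ℕ} {r : ℕ → Fin m} {c : ℕ → Fin 2}

theorem col_two_mul_eq_iff (h : IsCycle k r c) (hj : j < k) : c (2 * j) = c 0 ↔ Even j := by
  induction j with
  | zero => simp
  | succ j ih =>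
    have next_ne : c (2 * (j + 1)) ≠ c (2 * j) := by
      have col_next := h.col_next_eq (j := j) (by lia)
      rw [Nat.mod_eq_of_lt hj] at col_next
      exact col_next ▸ h.col_two_mul_add_one_ne (by lia)
    rw [Nat.even_add_one, ← ih (by lia)]
    lia

theorem even (h : IsCycle k r c) : Even k := by
  cases k with
  | zero => exact .zero
  | succ k =>
    have col_closes : c 0 = c (2 * k + 1) := by simpa using h.col_next_eq k.lt_succ_self
    rw [Nat.even_add_one, ← h.col_two_mul_eq_iff k.lt_succ_self, col_closes]
    exact (h.col_two_mul_add_one_ne k.lt_succ_self).symm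

theorem sub_eq_neg_one_pow_mul {R : Type*} [Ring R] (h : IsCycle k r c) (hj : j < k)
    (f : Fin 2 → R) :
    f (c (2 * j)) - f (c (2 * j + 1)) = (-1) ^ j * (f (c 0) - f (c 1)) := by
  have col_one_ne : c 1 ≠ c 0 := h.col_two_mul_add_one_ne (j := 0) (by lia)
  have col_succ_ne := h.col_two_mul_add_one_ne hj
  have col_eq_iff := h.col_two_mul_eq_iff hj
  obtain even_j | odd_j := j.even_or_odd
  · have col_eq : c (2 * j) = c 0 := col_eq_iff.mpr even_j
    have col_succ_eq : c (2 * j + 1) = c 1 := by lia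
    rw [col_eq, col_succ_eq, even_j.neg_one_pow, one_mul]
  · have col_ne : c (2 * j) ≠ c 0 := mt col_eq_iff.mp (Nat.not_even_iff_odd.mpr odd_j)
    have col_eq : c (2 * j) = c 1 := by lia
    have col_succ_eq : c (2 * j + 1) = c 0 := by lia
    rw [col_eq, col_succ_eq, odd_j.neg_one_pow, neg_one_mul, neg_sub]

theorem cycleSum_eq_alternating_sum (h : IsCycle k r c) (P : Fin m → Fin 2 → ZMod N) :
    cycleSum k P r c =
      ∑ j ∈ Finset.range k, (-1) ^ j * (P (r (2 * j)) (c 0) - P (r (2 * j)) (c 1)) := by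
  rw [h.cycleSum_eq]
  exact Finset.sum_congr rfl fun j hj ↦ h.sub_eq_neg_one_pow_mul (Finset.mem_range.mp hj) _

end TwoColumns

theorem cycleSum_ne_zero_of_isEquilateral {N k : ℕ} {P : Fin 3 → Fin 2 → ZMod N}
    {r : ℕ → Fin 3} {c : ℕ → Fin 2} (h : IsCycle k r c)
    (hP : IsEquilateral fun i ↦ P i 1 - P i 0) (two_ne : (2 : ZMod N) ≠ 0)
    (three_ne : (3 : ZMod N) ≠ 0) (k_pos : 0 < k) (k_lt : k < 6) : cycleSum k P r c ≠ 0 := by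
  have equilateral : IsEquilateral fun i ↦ P i (c 0) - P i (c 1) := by
    have col_ne : c 1 ≠ c 0 := h.col_two_mul_add_one_ne k_pos
    obtain ⟨hc0, hc1⟩ | ⟨hc0, hc1⟩ : c 0 = 0 ∧ c 1 = 1 ∨ c 0 = 1 ∧ c 1 = 0 := by lia
    · simpa only [hc0, hc1, Pi.neg_def, neg_sub] using hP.neg
    · simpa only [hc0, hc1] using hP
  rw [h.cycleSum_eq_alternating_sum]
  obtain rfl | rfl : k = 2 ∨ k = 4 := by
    have k_even := Nat.even_iff.mp h.even
    lia
  · have row_ne : r 0 ≠ r 2 := h.row_next_ne (j := 0) k_pos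
    have : Nontrivial (ZMod N) := nontrivial_of_ne _ _ two_ne
    intro sum_eq_zero
    simp only [Finset.sum_range_succ, Finset.sum_range_zero] at sum_eq_zero
    exact (equilateral.isUnit_sub row_ne).ne_zero (by linear_combination sum_eq_zero)
  · intro sum_eq_zero
    simp only [Finset.sum_range_succ, Finset.sum_range_zero] at sum_eq_zero
    exact equilateral.alternating_sum_ne_zero two_ne three_ne
      (h.row_next_ne (j := 0) (by lia)) (h.row_next_ne (j := 1) (by lia))
      (h.row_next_ne (j := 2) (by lia)) (h.row_next_ne (j := 3) (by lia))
      (by linear_combination sum_eq_zero)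

end IsCycle

theorem natCast_zmod_ne_zero_of_pos_of_lt {d N : ℕ} (d_pos : 0 < d) (d_lt : d < N) :
    (d : ZMod N) ≠ 0 :=
  (ZMod.natCast_eq_zero_iff d N).not.mpr (Nat.not_dvd_of_pos_of_lt d_pos d_lt)

/-- Proposition 1: for `N > 3` and `a : ZMod N` with `a * (1 - a) = 1`, the `3 × 2`
type-II IRS exponent matrix with first column all zeros and second column `(0, 1, a)`
has no cycle of length `4`, `6`, `8` or `10` with zero cycle sum; by Fossorier's
criterion the lifted QC-LDPC code has girth `12`. -/
theorem typeII_three_by_two_girth_twelve (N : ℕ) (hN : 3 < N) (a : ZMod N)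
    (ha : a * (1 - a) = 1)
    (P : Fin 3 → Fin 2 → ZMod N)
    (hP0 : ∀ i : Fin 3, P i 0 = 0)
    (hP01 : P 0 1 = 0) (hP11 : P 1 1 = 1) (hP21 : P 2 1 = a) :
    ∀ k : ℕ, 2 ≤ k → k ≤ 5 →
      ∀ (r : ℕ → Fin 3) (c : ℕ → Fin 2), IsCycle k r c → cycleSum k P r c ≠ 0 := by
  intro k two_le_k k_le_five r c cycle
  have column_sub : (fun i ↦ P i 1 - P i 0) = ![0, 1, a] := by
    ext i
    fin_cases i <;> simp [hP0, hP01, hP11, hP21]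
  have equilateral : IsEquilateral fun i ↦ P i 1 - P i 0 :=
    column_sub ▸ .of_mul_one_sub_eq_one ha
  have two_ne : (2 : ZMod N) ≠ 0 := natCast_zmod_ne_zero_of_pos_of_lt two_pos (by lia)
  have three_ne : (3 : ZMod N) ≠ 0 := natCast_zmod_ne_zero_of_pos_of_lt three_pos hN
  exact cycle.cycleSum_ne_zero_of_isEquilateral equilateral two_ne three_ne (by lia) (by lia)
end
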